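/- Let κ > 0, δ > 0, and let p ≥ 1 be an integer. For i = 1,…,p, let s_i ∈ ℝ^n with s_i ≠ 0, y_i ∈ ℝ^n with ‖y_i‖ ≤ κ‖s_i‖, and γ_i ∈ [δ, κ+δ]; define θ_i = 0.75·γ_i·(s_iᵀs_i)/(γ_i·s_iᵀs_i − s_iᵀy_i) if s_iᵀy_i < 0.25·γ_i·s_iᵀs_i and θ_i = 1 otherwise, and ȳ_i = θ_i·y_i + (1−θ_i)·γ_i·s_i. Let γ₀ ∈ [δ, κ+δ], set B₀ = γ₀·I, and for i = 1,…,p set B_i = B_{i−1} + (ȳ_iȳ_iᵀ)/(s_iᵀȳ_i) − (B_{i−1}s_i)(B_{i−1}s_i)ᵀ/(s_iᵀB_{i−1}s_i). Then every B_i is symmetric positive definite, and ‖B_p‖ ≤ 4p·κ²/δ + (4p+1)·(κ+δ); equivalently, every eigenvalue of H = B_p^{−1} is at least (4p·κ²/δ + (4p+1)·(κ+δ))^{−1}. -/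

import Mathlib

open Matrix

/-- The operator (spectral) norm of a real matrix, induced by the Euclidean norm. -/
noncomputable def l2OpNorm {n : ℕ} (A : Matrix (Fin n) (Fin n) ℝ) : ℝ :=
  ‖Matrix.toEuclideanCLM (𝕜 := ℝ) A‖

/-!
Split the quadratic form of a BFGS update as
`xᵀA'x = (x - ts)ᵀA(x - ts) + (xᵀȳ)² / (sᵀȳ)` with `t = (xᵀAs) / (sᵀAs)`. Both terms are nonnegative
when `sᵀȳ > 0`, and if the first vanishes then `x = ts`, where the second is `t²(sᵀȳ)`; so updates
preserve positive definiteness. In the Loewner order an update adds at most `ȳȳᵀ / (sᵀȳ)`, hence at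
most `(‖ȳ‖² / sᵀȳ) I`. Damping keeps `sᵀȳ ≥ γ‖s‖² / 4`, while `ȳ` is a convex combination of `y`
and `γs`, so `‖ȳ‖² ≤ (κ² + γ²)‖s‖²` and each step costs at most `4(κ² / γ + γ)`.
-/

open scoped MatrixOrder

variable {m : Type*} [Fintype m]

section LoewnerOrder

theorem sq_dotProduct_le (u v : m → ℝ) : (u ⬝ᵥ v) ^ 2 ≤ (u ⬝ᵥ u) * (v ⬝ᵥ v) := by
  simpa only [dotProduct, sq] using Finset.sum_mul_sq_le_sq_mul_sq Finset.univ u v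

variable [DecidableEq m] {A : Matrix m m ℝ} {M : ℝ}

theorem vecMulVec_self_le_smul_one (v : m → ℝ) :
    vecMulVec v v ≤ (v ⬝ᵥ v) • (1 : Matrix m m ℝ) := by
  refine Matrix.le_iff.2 (PosSemidef.of_dotProduct_mulVec_nonneg ?_ fun x => ?_)
  · exact (isHermitian_one.smul (.all _)).sub (posSemidef_vecMulVec_self_star v).isHermitian
  · have expand : star x ⬝ᵥ ((v ⬝ᵥ v) • (1 : Matrix m m ℝ) - vecMulVec v v) *ᵥ x =
        (x ⬝ᵥ x) * (v ⬝ᵥ v) - (x ⬝ᵥ v) ^ 2 := by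
      simp only [star_trivial, sub_mulVec, smul_mulVec, one_mulVec, vecMulVec_mulVec,
        op_smul_eq_smul, dotProduct_sub, dotProduct_smul, smul_eq_mul, dotProduct_comm v x]
      ring
    rw [expand]
    exact sub_nonneg.2 (sq_dotProduct_le x v)

theorem dotProduct_mulVec_le_of_le_smul_one (hAM : A ≤ M • 1) (x : m → ℝ) :
    x ⬝ᵥ A *ᵥ x ≤ M * (x ⬝ᵥ x) := by
  simpa [sub_mulVec, smul_mulVec] using (Matrix.le_iff.1 hAM).dotProduct_mulVec_nonneg x

theorem norm_toEuclideanCLM_le_of_le_smul_one (hA : A.PosSemidef) (hM : 0 ≤ M)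
    (hAM : A ≤ M • 1) : ‖toEuclideanCLM (𝕜 := ℝ) A‖ ≤ M := by
  have symm : (toEuclideanCLM (𝕜 := ℝ) A : EuclideanSpace ℝ m →ₗ[ℝ] _).IsSymmetric :=
    isSymmetric_toEuclideanLin_iff.2 hA.isHermitian
  rw [ContinuousLinearMap.norm_eq_iSup_rayleighQuotient _ symm]
  refine ciSup_le fun x => ?_
  have nonneg : 0 ≤ x.ofLp ⬝ᵥ A *ᵥ x.ofLp := hA.dotProduct_mulVec_nonneg x.ofLp
  rw [ContinuousLinearMap.rayleighQuotient, ContinuousLinearMap.reApplyInnerSelf_apply,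
    real_inner_comm, RCLike.re_to_real, inner_toEuclideanCLM, abs_of_nonneg (by positivity)]
  refine div_le_of_le_mul₀ (by positivity) hM ?_
  have norm_sq : ‖x‖ ^ 2 = x.ofLp ⬝ᵥ x.ofLp := by
    simp only [EuclideanSpace.real_norm_sq_eq, dotProduct, ← sq]
  exact norm_sq ▸ dotProduct_mulVec_le_of_le_smul_one hAM x.ofLp

theorem inv_le_of_mem_spectrum_inv (hA : A.PosDef) (hAM : A ≤ M • 1) {t : ℝ}
    (ht : t ∈ spectrum ℝ A⁻¹) : M⁻¹ ≤ t := by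
  have t_pos : 0 < t := hA.inv.isStrictlyPositive.spectrum_pos ht
  have t_inv_mem : t⁻¹ ∈ spectrum ℝ A := by
    obtain ⟨U, rfl⟩ := hA.isUnit
    rwa [spectrum.inv₀_mem_iff, coe_units_inv]
  have t_inv_le : t⁻¹ ≤ M :=
    (le_algebraMap_iff_spectrum_le hA.isHermitian).1
      (by rwa [Algebra.algebraMap_eq_smul_one]) _ t_inv_mem
  exact inv_le_of_inv_le₀ t_pos t_inv_le

end LoewnerOrder

section BFGS

/-- The BFGS update of the Hessian approximation `A` along the step `s` with gradient difference
`y`. It is meaningful only when `sᵀy` and `sᵀAs` are nonzero: otherwise the correction with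
vanishing denominator is dropped. -/
noncomputable def bfgsUpdate (A : Matrix m m ℝ) (s y : m → ℝ) : Matrix m m ℝ :=
  A + (s ⬝ᵥ y)⁻¹ • vecMulVec y y - (s ⬝ᵥ A *ᵥ s)⁻¹ • vecMulVec (A *ᵥ s) (A *ᵥ s)

variable {A : Matrix m m ℝ} {s y : m → ℝ}

theorem isHermitian_bfgsUpdate (hA : A.IsHermitian) : (bfgsUpdate A s y).IsHermitian :=
  (hA.add ((posSemidef_vecMulVec_self_star y).isHermitian.smul (.all _))).sub
    ((posSemidef_vecMulVec_self_star (A *ᵥ s)).isHermitian.smul (.all _))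

theorem dotProduct_bfgsUpdate_mulVec (A : Matrix m m ℝ) (s y x : m → ℝ) :
    x ⬝ᵥ bfgsUpdate A s y *ᵥ x =
      x ⬝ᵥ A *ᵥ x + (x ⬝ᵥ y) ^ 2 / (s ⬝ᵥ y) - (x ⬝ᵥ A *ᵥ s) ^ 2 / (s ⬝ᵥ A *ᵥ s) := by
  simp only [bfgsUpdate, sub_mulVec, add_mulVec, smul_mulVec, vecMulVec_mulVec, op_smul_eq_smul,
    dotProduct_sub, dotProduct_add, dotProduct_smul, smul_eq_mul, dotProduct_comm y x,
    dotProduct_comm (A *ᵥ s) x]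
  ring

theorem dotProduct_mulVec_comm_of_isHermitian (hA : A.IsHermitian) (u v : m → ℝ) :
    u ⬝ᵥ A *ᵥ v = v ⬝ᵥ A *ᵥ u := by
  rw [dotProduct_mulVec, ← mulVec_transpose, ← conjTranspose_eq_transpose_of_trivial, hA.eq,
    dotProduct_comm]

theorem dotProduct_mulVec_sub_smul_self (hA : A.IsHermitian) (hs : s ⬝ᵥ A *ᵥ s ≠ 0) (x : m → ℝ) :
    (x - (x ⬝ᵥ A *ᵥ s / (s ⬝ᵥ A *ᵥ s)) • s) ⬝ᵥ A *ᵥ (x - (x ⬝ᵥ A *ᵥ s / (s ⬝ᵥ A *ᵥ s)) • s) =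
      x ⬝ᵥ A *ᵥ x - (x ⬝ᵥ A *ᵥ s) ^ 2 / (s ⬝ᵥ A *ᵥ s) := by
  simp only [mulVec_sub, mulVec_smul, dotProduct_sub, sub_dotProduct, dotProduct_smul,
    smul_dotProduct, smul_eq_mul, dotProduct_mulVec_comm_of_isHermitian hA s x]
  field_simp
  ring

theorem posDef_bfgsUpdate (hA : A.PosDef) (hsy : 0 < s ⬝ᵥ y) : (bfgsUpdate A s y).PosDef := by
  have s_ne_zero : s ≠ 0 := by
    rintro rfl
    simp at hsy
  have sAs_pos : 0 < s ⬝ᵥ A *ᵥ s := hA.dotProduct_mulVec_pos s_ne_zero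
  refine .of_dotProduct_mulVec_pos (isHermitian_bfgsUpdate hA.isHermitian) fun x x_ne_zero => ?_
  rw [star_trivial, dotProduct_bfgsUpdate_mulVec, add_sub_right_comm,
    ← dotProduct_mulVec_sub_smul_self hA.isHermitian sAs_pos.ne']
  generalize x ⬝ᵥ A *ᵥ s / (s ⬝ᵥ A *ᵥ s) = t
  obtain residual_eq_zero | residual_ne_zero := eq_or_ne (x - t • s) 0
  · obtain rfl : x = t • s := sub_eq_zero.1 residual_eq_zero
    have t_ne_zero : t ≠ 0 := (smul_ne_zero_iff.1 x_ne_zero).1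
    rw [residual_eq_zero, zero_dotProduct, zero_add, smul_dotProduct, smul_eq_mul]
    positivity
  · have residual_pos : 0 < (x - t • s) ⬝ᵥ A *ᵥ (x - t • s) :=
      hA.dotProduct_mulVec_pos residual_ne_zero
    positivity

theorem bfgsUpdate_le_add_smul_one [DecidableEq m] {C : ℝ} (hsAs : 0 ≤ s ⬝ᵥ A *ᵥ s)
    (hsy : 0 < s ⬝ᵥ y) (hC : y ⬝ᵥ y ≤ C * (s ⬝ᵥ y)) : bfgsUpdate A s y ≤ A + C • 1 := by
  have subtracted_nonneg : 0 ≤ (s ⬝ᵥ A *ᵥ s)⁻¹ • vecMulVec (A *ᵥ s) (A *ᵥ s) :=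
    smul_nonneg (inv_nonneg.2 hsAs) (posSemidef_vecMulVec_self_star (A *ᵥ s)).nonneg
  have added_le : (s ⬝ᵥ y)⁻¹ • vecMulVec y y ≤ C • (1 : Matrix m m ℝ) :=
    calc (s ⬝ᵥ y)⁻¹ • vecMulVec y y
      _ ≤ (s ⬝ᵥ y)⁻¹ • (y ⬝ᵥ y) • (1 : Matrix m m ℝ) :=
        smul_le_smul_of_nonneg_left (vecMulVec_self_le_smul_one y) (inv_nonneg.2 hsy.le)
      _ = ((s ⬝ᵥ y)⁻¹ * (y ⬝ᵥ y)) • (1 : Matrix m m ℝ) := smul_smul _ _ _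
      _ ≤ C • (1 : Matrix m m ℝ) :=
        smul_le_smul_of_nonneg_right (by rwa [inv_mul_le_iff₀ hsy, mul_comm]) zero_le_one
  exact (sub_le_self _ subtracted_nonneg).trans (add_le_add_right added_le A)

end BFGS

section BFGSSequence

variable {p : ℕ} {B : ℕ → Matrix m m ℝ} {s y : ℕ → m → ℝ}

theorem posDef_of_forall_eq_bfgsUpdate (hB0 : (B 0).PosDef)
    (hB : ∀ i < p, B (i + 1) = bfgsUpdate (B i) (s i) (y i)) (hsy : ∀ i < p, 0 < s i ⬝ᵥ y i) :
    ∀ i ≤ p, (B i).PosDef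
  | 0, _ => hB0
  | i + 1, hi => hB i hi ▸
      posDef_bfgsUpdate (posDef_of_forall_eq_bfgsUpdate hB0 hB hsy i (Nat.le_of_succ_le hi))
        (hsy i hi)

theorem le_add_smul_one_of_forall_eq_bfgsUpdate [DecidableEq m] {C : ℝ} (hB0 : (B 0).PosDef)
    (hB : ∀ i < p, B (i + 1) = bfgsUpdate (B i) (s i) (y i)) (hsy : ∀ i < p, 0 < s i ⬝ᵥ y i)
    (hC : ∀ i < p, y i ⬝ᵥ y i ≤ C * (s i ⬝ᵥ y i)) :
    ∀ i ≤ p, B i ≤ B 0 + (i * C) • 1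
  | 0, _ => by simp
  | i + 1, hi => by
      have hi' : i ≤ p := Nat.le_of_succ_le hi
      have curvature_nonneg : 0 ≤ s i ⬝ᵥ B i *ᵥ s i :=
        (posDef_of_forall_eq_bfgsUpdate hB0 hB hsy i hi').posSemidef.dotProduct_mulVec_nonneg (s i)
      calc B (i + 1)
        _ = bfgsUpdate (B i) (s i) (y i) := hB i hi
        _ ≤ B i + C • 1 :=
          bfgsUpdate_le_add_smul_one curvature_nonneg (hsy i hi) (hC i hi)
        _ ≤ B 0 + (i * C) • 1 + C • 1 := by
          gcongr
          exact le_add_smul_one_of_forall_eq_bfgsUpdate hB0 hB hsy hC i hi'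
        _ = B 0 + ((i + 1 : ℕ) * C) • 1 := by
          rw [add_assoc, ← add_smul, Nat.cast_succ, add_one_mul]

end BFGSSequence

section Damping

theorem dotProduct_self_convexComb_le {a b : ℝ} (ha : 0 ≤ a) (hb : 0 ≤ b) (hab : a + b = 1)
    (u v : m → ℝ) :
    (a • u + b • v) ⬝ᵥ (a • u + b • v) ≤ a * (u ⬝ᵥ u) + b * (v ⬝ᵥ v) := by
  simp only [dotProduct, ← sq, Finset.mul_sum, ← Finset.sum_add_distrib]
  exact Finset.sum_le_sum fun i _ =>
    even_two.convexOn_pow.2 (Set.mem_univ (u i)) (Set.mem_univ (v i)) ha hb hab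

/-- The damping weight `θ`: when the curvature `sᵀy` falls below a quarter of `γ sᵀs`, it is the
weight for which the damped difference has curvature exactly `γ sᵀs / 4`. -/
noncomputable def dampingFactor (γ : ℝ) (s y : m → ℝ) : ℝ :=
  if s ⬝ᵥ y < 0.25 * γ * (s ⬝ᵥ s)
  then 0.75 * γ * (s ⬝ᵥ s) / (γ * (s ⬝ᵥ s) - s ⬝ᵥ y) else 1

/-- The damped gradient difference `ȳ`, which interpolates between `y` and `γ s`, the gradient
difference predicted by the initial matrix `γ I`. -/
noncomputable def dampedDiff (γ : ℝ) (s y : m → ℝ) : m → ℝ :=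
  dampingFactor γ s y • y + (1 - dampingFactor γ s y) • γ • s

variable {γ : ℝ}

theorem dampingFactor_mem_Icc (hγ : 0 ≤ γ) (s y : m → ℝ) :
    dampingFactor γ s y ∈ Set.Icc 0 1 := by
  have γss_nonneg : 0 ≤ γ * (s ⬝ᵥ s) := mul_nonneg hγ (dotProduct_star_self_nonneg s)
  unfold dampingFactor
  split_ifs with low_curvature
  · exact ⟨div_nonneg (by linarith) (by linarith), div_le_one_of_le₀ (by linarith) (by linarith)⟩
  · exact Set.right_mem_Icc.2 zero_le_one

theorem quarter_mul_le_dotProduct_dampedDiff (hγ : 0 ≤ γ) (s y : m → ℝ) :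
    0.25 * γ * (s ⬝ᵥ s) ≤ s ⬝ᵥ dampedDiff γ s y := by
  have γss_nonneg : 0 ≤ γ * (s ⬝ᵥ s) := mul_nonneg hγ (dotProduct_star_self_nonneg s)
  have expand : s ⬝ᵥ dampedDiff γ s y =
      γ * (s ⬝ᵥ s) - dampingFactor γ s y * (γ * (s ⬝ᵥ s) - s ⬝ᵥ y) := by
    simp only [dampedDiff, dotProduct_add, dotProduct_smul, smul_eq_mul]
    ring
  rw [expand, dampingFactor]
  split_ifs with low_curvature
  · rw [div_mul_cancel₀ _ (by linarith)]
    linarith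
  · linarith

theorem dotProduct_dampedDiff_pos (hγ : 0 < γ) {s : m → ℝ} (hs : s ≠ 0) (y : m → ℝ) :
    0 < s ⬝ᵥ dampedDiff γ s y := by
  have ss_pos : 0 < s ⬝ᵥ s := dotProduct_star_self_pos_iff.2 hs
  exact lt_of_lt_of_le (by positivity) (quarter_mul_le_dotProduct_dampedDiff hγ.le s y)

theorem dotProduct_dampedDiff_self_le {κ : ℝ} {s y : m → ℝ} (hγ : 0 < γ)
    (hy : y ⬝ᵥ y ≤ κ ^ 2 * (s ⬝ᵥ s)) :
    dampedDiff γ s y ⬝ᵥ dampedDiff γ s y ≤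
      4 * (κ ^ 2 / γ + γ) * (s ⬝ᵥ dampedDiff γ s y) := by
  obtain ⟨θ_nonneg, θ_le_one⟩ := dampingFactor_mem_Icc hγ.le s y
  have ss_nonneg : 0 ≤ s ⬝ᵥ s := dotProduct_star_self_nonneg s
  have yy_nonneg : 0 ≤ y ⬝ᵥ y := dotProduct_star_self_nonneg y
  have γs_sq : γ • s ⬝ᵥ γ • s = γ ^ 2 * (s ⬝ᵥ s) := by
    rw [smul_dotProduct, dotProduct_smul, smul_smul, smul_eq_mul, sq]
  calc dampedDiff γ s y ⬝ᵥ dampedDiff γ s y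
    _ ≤ dampingFactor γ s y * (y ⬝ᵥ y) + (1 - dampingFactor γ s y) * (γ • s ⬝ᵥ γ • s) :=
      dotProduct_self_convexComb_le θ_nonneg (sub_nonneg.2 θ_le_one) (add_sub_cancel _ _) _ _
    _ ≤ 1 * (κ ^ 2 * (s ⬝ᵥ s)) + 1 * (γ ^ 2 * (s ⬝ᵥ s)) := by
      rw [γs_sq]
      gcongr
      exact sub_le_self 1 θ_nonneg
    _ = 4 * (κ ^ 2 / γ + γ) * (0.25 * γ * (s ⬝ᵥ s)) := by
      field_simp
      ring
    _ ≤ 4 * (κ ^ 2 / γ + γ) * (s ⬝ᵥ dampedDiff γ s y) := by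
      gcongr
      exact quarter_mul_le_dotProduct_dampedDiff hγ.le s y

theorem dotProduct_dampedDiff_self_le_of_mem_Icc {κ δ : ℝ} {s y : m → ℝ} (hδ : 0 < δ)
    (hγ : γ ∈ Set.Icc δ (κ + δ)) (hy : √(y ⬝ᵥ y) ≤ κ * √(s ⬝ᵥ s)) :
    dampedDiff γ s y ⬝ᵥ dampedDiff γ s y ≤
      (4 * κ ^ 2 / δ + 4 * (κ + δ)) * (s ⬝ᵥ dampedDiff γ s y) := by
  have ss_nonneg : 0 ≤ s ⬝ᵥ s := dotProduct_star_self_nonneg s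
  have γ_pos : 0 < γ := hδ.trans_le hγ.1
  have yy_le : y ⬝ᵥ y ≤ κ ^ 2 * (s ⬝ᵥ s) := by
    rw [← Real.sq_sqrt ss_nonneg, ← mul_pow]
    exact (Real.sqrt_le_iff.1 hy).2
  have curvature_nonneg : 0 ≤ s ⬝ᵥ dampedDiff γ s y :=
    le_trans (by positivity) (quarter_mul_le_dotProduct_dampedDiff γ_pos.le s y)
  calc dampedDiff γ s y ⬝ᵥ dampedDiff γ s y
    _ ≤ 4 * (κ ^ 2 / γ + γ) * (s ⬝ᵥ dampedDiff γ s y) := dotProduct_dampedDiff_self_le γ_pos yy_le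
    _ ≤ 4 * (κ ^ 2 / δ + (κ + δ)) * (s ⬝ᵥ dampedDiff γ s y) := by
      gcongr
      exacts [hγ.1, hγ.2]
    _ = (4 * κ ^ 2 / δ + 4 * (κ + δ)) * (s ⬝ᵥ dampedDiff γ s y) := by ring

end Damping

theorem sdlbfgs_B_posdef_and_norm_bound
    {n : ℕ} (hn : 1 ≤ n)
    (κ δ : ℝ) (hκ : 0 < κ) (hδ : 0 < δ)
    (p : ℕ) (hp : 1 ≤ p)
    (s y ybar : ℕ → Fin n → ℝ) (γ θ : ℕ → ℝ) (γ0 : ℝ)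
    (B : ℕ → Matrix (Fin n) (Fin n) ℝ)
    (hs : ∀ i, 1 ≤ i → i ≤ p → s i ≠ 0)
    (hy : ∀ i, 1 ≤ i → i ≤ p →
      Real.sqrt (y i ⬝ᵥ y i) ≤ κ * Real.sqrt (s i ⬝ᵥ s i))
    (hγ : ∀ i, 1 ≤ i → i ≤ p → γ i ∈ Set.Icc δ (κ + δ))
    (hθ : ∀ i, 1 ≤ i → i ≤ p → θ i =
      if s i ⬝ᵥ y i < 0.25 * γ i * (s i ⬝ᵥ s i)
      then 0.75 * γ i * (s i ⬝ᵥ s i) / (γ i * (s i ⬝ᵥ s i) - s i ⬝ᵥ y i) else 1)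
    (hybar : ∀ i, 1 ≤ i → i ≤ p →
      ybar i = θ i • y i + (1 - θ i) • γ i • s i)
    (hγ0 : γ0 ∈ Set.Icc δ (κ + δ))
    (hB0 : B 0 = γ0 • (1 : Matrix (Fin n) (Fin n) ℝ))
    (hBrec : ∀ i, 1 ≤ i → i ≤ p → B i = B (i - 1)
      + (s i ⬝ᵥ ybar i)⁻¹ • Matrix.vecMulVec (ybar i) (ybar i)
      - (s i ⬝ᵥ (B (i - 1)).mulVec (s i))⁻¹ •
          Matrix.vecMulVec ((B (i - 1)).mulVec (s i)) ((B (i - 1)).mulVec (s i))) :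
    (∀ i, i ≤ p → (B i).PosDef) ∧
    l2OpNorm (B p) ≤ 4 * p * κ ^ 2 / δ + (4 * p + 1) * (κ + δ) ∧
    ∀ t : ℝ, t ∈ spectrum ℝ (B p)⁻¹ →
      (4 * p * κ ^ 2 / δ + (4 * p + 1) * (κ + δ))⁻¹ ≤ t := by
  have ybar_eq i (hi : i < p) : ybar (i + 1) = dampedDiff (γ (i + 1)) (s (i + 1)) (y (i + 1)) := by
    rw [hybar _ i.succ_pos hi, hθ _ i.succ_pos hi, dampedDiff, dampingFactor]
  have curvature_pos i (hi : i < p) : 0 < s (i + 1) ⬝ᵥ ybar (i + 1) :=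
    ybar_eq i hi ▸ dotProduct_dampedDiff_pos (hδ.trans_le (hγ _ i.succ_pos hi).1)
      (hs _ i.succ_pos hi) _
  have ybar_sq_le i (hi : i < p) : ybar (i + 1) ⬝ᵥ ybar (i + 1) ≤
      (4 * κ ^ 2 / δ + 4 * (κ + δ)) * (s (i + 1) ⬝ᵥ ybar (i + 1)) :=
    ybar_eq i hi ▸ dotProduct_dampedDiff_self_le_of_mem_Icc hδ (hγ _ i.succ_pos hi)
      (hy _ i.succ_pos hi)
  have update i (hi : i < p) : B (i + 1) = bfgsUpdate (B i) (s (i + 1)) (ybar (i + 1)) :=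
    hBrec (i + 1) i.succ_pos hi
  have B0_posDef : (B 0).PosDef := hB0 ▸ PosDef.one.smul (hδ.trans_le hγ0.1)
  have posDef := posDef_of_forall_eq_bfgsUpdate B0_posDef update curvature_pos
  have B_le : B p ≤ (4 * p * κ ^ 2 / δ + (4 * p + 1) * (κ + δ)) • 1 :=
    calc B p
      _ ≤ B 0 + (p * (4 * κ ^ 2 / δ + 4 * (κ + δ))) • 1 :=
        le_add_smul_one_of_forall_eq_bfgsUpdate B0_posDef update curvature_pos ybar_sq_le p le_rfl
      _ = (γ0 + p * (4 * κ ^ 2 / δ + 4 * (κ + δ))) • 1 := by rw [hB0, add_smul]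
      _ ≤ (4 * p * κ ^ 2 / δ + (4 * p + 1) * (κ + δ)) • 1 :=
        smul_le_smul_of_nonneg_right (by linear_combination hγ0.2) zero_le_one
  exact ⟨posDef,
    norm_toEuclideanCLM_le_of_le_smul_one (posDef p le_rfl).posSemidef (by positivity) B_le,
    fun _ => inv_le_of_mem_spectrum_inv (posDef p le_rfl) B_le⟩
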